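/- (Corollary 1) Under the hypotheses of Theorem 2 (Q has a unique minimum at (γ₀,g₀), and (γ̂_n, ĝ_n) are random elements of Γ×𝒢 that almost surely minimize Q_n over Γ×𝒢 for every n), sup_{t∈[0,A]} |log ĝ_n(t) − log g₀(t)| converges to 0 with probability 1 as n→∞. -/

import Mathlib

open MeasureTheory ProbabilityTheory Filter Set Topology

/-- The class 𝒢 of nonincreasing, `[m,M]`-valued, `L`-Lipschitz continuous functions
on `[0,A]`. -/
def inG (A m M L : ℝ) (g : ℝ → ℝ) : Prop :=
  ContinuousOn g (Set.Icc 0 A) ∧ AntitoneOn g (Set.Icc 0 A) ∧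
  (∀ t ∈ Set.Icc (0 : ℝ) A, g t ∈ Set.Icc m M) ∧
  LipschitzOnWith (Real.toNNReal L) g (Set.Icc 0 A)

/-- The limiting criterion `Q(γ, g)`. -/
noncomputable def Qlim (Δ γ₀ : ℝ) (x z g₀ : ℝ → ℝ) (γ : ℝ) (g : ℝ → ℝ) : ℝ :=
  (1 / Δ) * ∫ w in (0 : ℝ)..Δ,
    (Real.log (1 + γ₀ * x w) - Real.log (1 + γ * x w) +
      Real.log (g₀ (z w)) - Real.log (g (z w))) ^ 2

/-- The empirical average squared error loss `Q_n(γ, g)(ω)`, where the observations are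
`yᵢ = log(1+γ₀xᵢ) + log g₀(zᵢ) + εᵢ` with `xᵢ = x(iΔ/n)`, `zᵢ = z(iΔ/n)`. -/
noncomputable def Qemp {Ω : Type*} (Δ γ₀ : ℝ) (x z g₀ : ℝ → ℝ) (ε : ℤ → Ω → ℝ)
    (n : ℕ) (γ : ℝ) (g : ℝ → ℝ) (ω : Ω) : ℝ :=
  (1 / (n : ℝ)) * ∑ i ∈ Finset.Icc 1 n,
    ((Real.log (1 + γ₀ * x ((i : ℝ) * Δ / n)) + Real.log (g₀ (z ((i : ℝ) * Δ / n))) +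
        ε (i : ℤ) ω)
      - Real.log (1 + γ * x ((i : ℝ) * Δ / n)) - Real.log (g (z ((i : ℝ) * Δ / n)))) ^ 2


lemma aux_noise (φ : ℝ) (hφ1 : |φ| < 1) (e u : ℕ → ℝ) (v : ℝ)
    (hrec : ∀ n, e (n + 1) = φ * e n + u n)
    (hu : Tendsto (fun n : ℕ => (∑ i ∈ Finset.range n, u i) / n) atTop (𝓝 0))
    (hu2 : Tendsto (fun n : ℕ => (∑ i ∈ Finset.range n, (u i) ^ 2) / n) atTop (𝓝 v)) :
    Tendsto (fun n : ℕ => (∑ i ∈ Finset.range n, e (i + 1)) / n) atTop (𝓝 0) ∧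
    ∃ B : ℝ, 0 ≤ B ∧ ∀ n : ℕ, ∑ i ∈ Finset.range n, |e (i + 1)| ≤ B * n := by
  obtain ⟨V, hV⟩ := hu2.bddAbove_range
  have hV' : ∀ n : ℕ, ∑ i ∈ Finset.range n, (u i) ^ 2 ≤ V * n := by
    intro n
    rcases Nat.eq_zero_or_pos n with h | h
    · simp [h]
    · have := hV ⟨n, rfl⟩
      have hn : (0 : ℝ) < n := by exact_mod_cast h
      rwa [div_le_iff₀ hn] at this
  set a := |φ| with ha
  have ha0 : 0 ≤ a := abs_nonneg _
  have h1a : 0 < 1 - a := by linarith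
  have hstep : ∀ n, e (n + 1) ^ 2 ≤ a * e n ^ 2 + (u n) ^ 2 / (1 - a) := by
    intro n
    rw [hrec, ← sub_nonneg]
    have h2 : (φ * e n + u n) ^ 2 ≤ (a * |e n| + |u n|) ^ 2 := by
      rw [← sq_abs (φ * e n + u n)]
      have : |φ * e n + u n| ≤ a * |e n| + |u n| := by
        rw [ha, ← abs_mul]; exact abs_add_le _ _
      gcongr
    have h3 : (a * |e n| + |u n|) ^ 2 ≤ a * |e n| ^ 2 + |u n| ^ 2 / (1 - a) := by
      rw [← sub_nonneg]
      have : a * |e n| ^ 2 + |u n| ^ 2 / (1 - a) - (a * |e n| + |u n|) ^ 2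
          = a * ((1 - a) * |e n| - |u n|) ^ 2 / (1 - a) := by
        field_simp; ring
      rw [this]; positivity
    rw [sq_abs, sq_abs] at h3
    linarith
  have hsum : ∀ n : ℕ, (1 - a) * ∑ i ∈ Finset.range n, e (i + 1) ^ 2 + a * e n ^ 2 ≤
      a * e 0 ^ 2 + (∑ i ∈ Finset.range n, (u i) ^ 2) / (1 - a) := by
    intro n
    induction n with
    | zero => simp
    | succ k ih =>
      rw [Finset.sum_range_succ, Finset.sum_range_succ, add_div]
      have := hstep k
      linarith
  have hSS : ∀ n : ℕ, 1 ≤ n → ∑ i ∈ Finset.range n, e (i + 1) ^ 2 ≤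
      ((e 0 ^ 2 + V / (1 - a)) / (1 - a)) * n := by
    intro n hn
    have hn' : (1 : ℝ) ≤ n := by exact_mod_cast hn
    have h1 := hsum n
    have h2 := hV' n
    have h3 : (∑ i ∈ Finset.range n, (u i) ^ 2) / (1 - a) ≤ V * n / (1 - a) := by gcongr
    have h4 : 0 ≤ a * e n ^ 2 := by positivity
    rw [div_mul_eq_mul_div, le_div_iff₀ h1a]
    have h5 : a * e 0 ^ 2 ≤ e 0 ^ 2 * n := by
      have := sq_nonneg (e 0)
      nlinarith
    have h6 : (e 0 ^ 2 + V / (1 - a)) * n = e 0 ^ 2 * n + V * n / (1 - a) := by ring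
    linarith
  set C := (e 0 ^ 2 + V / (1 - a)) / (1 - a) with hC
  have hC0 : 0 ≤ C := by
    have := hSS 1 le_rfl
    simp at this
    nlinarith [sq_nonneg (e 1)]
  constructor
  · have hen : Tendsto (fun n : ℕ => e n / n) atTop (𝓝 0) := by
      have h1 : Tendsto (fun n : ℕ => (e n / n) ^ 2) atTop (𝓝 0) := by
        have h0 : Tendsto (fun n : ℕ => C / (n : ℝ)) atTop (𝓝 0) :=
          tendsto_const_div_atTop_nhds_zero_nat C
        refine tendsto_of_tendsto_of_tendsto_of_le_of_le' tendsto_const_nhds h0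
          (Eventually.of_forall fun n => sq_nonneg _) ?_
        filter_upwards [eventually_ge_atTop 1] with n hn
        have hn' : (0 : ℝ) < n := by exact_mod_cast hn
        have h2 := hSS n hn
        have h3 : e n ^ 2 ≤ ∑ i ∈ Finset.range n, e (i + 1) ^ 2 := by
          obtain ⟨k, rfl⟩ : ∃ k, n = k + 1 := ⟨n - 1, by omega⟩
          exact Finset.single_le_sum (f := fun i => e (i + 1) ^ 2)
            (fun i _ => sq_nonneg _) (Finset.mem_range.2 (Nat.lt_succ_self k))
        rw [div_pow, div_le_div_iff₀ (by positivity) hn']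
        nlinarith
      have h2 := h1.sqrt
      simp only [Real.sqrt_sq_eq_abs, Real.sqrt_zero] at h2
      exact (tendsto_zero_iff_abs_tendsto_zero _).2 h2
    have h1φ : 1 - φ ≠ 0 := by
      have := le_abs_self φ
      intro h; linarith
    have hid : ∀ n : ℕ, (∑ i ∈ Finset.range n, e (i + 1)) =
        (φ * (e 0 - e n) + ∑ i ∈ Finset.range n, u i) / (1 - φ) := by
      intro n
      induction n with
      | zero => simp
      | succ k ih =>
        rw [Finset.sum_range_succ, ih, Finset.sum_range_succ, hrec]
        field_simp; ring
    have h0 : Tendsto (fun n : ℕ => e 0 / (n : ℝ)) atTop (𝓝 0) :=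
      tendsto_const_div_atTop_nhds_zero_nat _
    have := (((h0.sub hen).const_mul φ).add hu).div_const (1 - φ)
    simp only [sub_zero, mul_zero, add_zero, zero_div] at this
    refine this.congr fun n => ?_
    rw [hid]; ring
  · refine ⟨1 + C, by positivity, fun n => ?_⟩
    rcases Nat.eq_zero_or_pos n with h | h
    · simp [h]
    · have h2 := hSS n h
      calc ∑ i ∈ Finset.range n, |e (i + 1)| ≤ ∑ i ∈ Finset.range n, (1 + e (i + 1) ^ 2) := by
            refine Finset.sum_le_sum fun i _ => ?_
            rw [← sq_abs]; nlinarith [sq_nonneg (|e (i + 1)| - 1), abs_nonneg (e (i+1))]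
        _ = n + ∑ i ∈ Finset.range n, e (i + 1) ^ 2 := by
            rw [Finset.sum_add_distrib]; simp
        _ ≤ (1 + C) * n := by linarith

lemma aux_abel (a e : ℕ → ℝ) (n : ℕ) :
    ∑ i ∈ Finset.range n, a i * e i = a n * ∑ i ∈ Finset.range n, e i
      - ∑ i ∈ Finset.range n, (a (i + 1) - a i) * ∑ j ∈ Finset.range (i + 1), e j := by
  induction n with
  | zero => simp
  | succ k ih =>
    rw [Finset.sum_range_succ, ih, Finset.sum_range_succ _ k, Finset.sum_range_succ _ k,
      Finset.sum_range_succ _ k]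
    ring

lemma aux_unif (e : ℕ → ℝ)
    (h : Tendsto (fun n : ℕ => (∑ i ∈ Finset.range n, e i) / n) atTop (𝓝 0))
    (δ : ℝ) (hδ : 0 < δ) :
    ∀ᶠ n : ℕ in atTop, ∀ p ≤ n, |∑ i ∈ Finset.range p, e i| ≤ δ * n := by
  rw [Metric.tendsto_atTop] at h
  obtain ⟨N, hN⟩ := h δ hδ
  set C := ∑ i ∈ Finset.range N, |e i|
  obtain ⟨K, hK⟩ := exists_nat_gt (C / δ)
  filter_upwards [eventually_ge_atTop K] with n hn p hp
  have hpn : (p : ℝ) ≤ n := by exact_mod_cast hp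
  have hKn : (K : ℝ) ≤ n := by exact_mod_cast hn
  rcases lt_or_ge p N with h1 | h1
  · have : |∑ i ∈ Finset.range p, e i| ≤ C :=
      (Finset.abs_sum_le_sum_abs _ _).trans
        (Finset.sum_le_sum_of_subset_of_nonneg (Finset.range_subset_range.2 h1.le)
          (fun _ _ _ => abs_nonneg _))
    rw [div_lt_iff₀ hδ] at hK
    nlinarith
  · rcases Nat.eq_zero_or_pos p with h0 | h0
    · subst h0; simp; positivity
    · have h2 := hN p h1
      have hp' : (0 : ℝ) < p := by exact_mod_cast h0
      rw [Real.dist_eq, sub_zero, abs_div, abs_of_pos hp', div_lt_iff₀ hp'] at h2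
      nlinarith

lemma aux_grid {Δ : ℝ} (hΔ : 0 < Δ) {n i : ℕ} (hi : i ≤ n) :
    (i : ℝ) * Δ / n ∈ Icc 0 Δ := by
  rcases Nat.eq_zero_or_pos n with h | h
  · subst h; simp [hΔ.le]
  · have hn : (0 : ℝ) < n := by exact_mod_cast h
    have : (i : ℝ) ≤ n := by exact_mod_cast hi
    constructor
    · positivity
    · rw [div_le_iff₀ hn]; nlinarith

lemma aux_weighted_lip (Δ : ℝ) (hΔ : 0 < Δ) (e : ℕ → ℝ)
    (h : Tendsto (fun n : ℕ => (∑ i ∈ Finset.range n, e i) / n) atTop (𝓝 0))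
    (F : ℝ → ℝ) (C K : ℝ) (hF : ∀ w ∈ Icc 0 Δ, |F w| ≤ K)
    (hC : ∀ w ∈ Icc 0 Δ, ∀ w' ∈ Icc 0 Δ, |F w - F w'| ≤ C * |w - w'|) (η : ℝ) (hη : 0 < η) :
    ∀ᶠ n : ℕ in atTop, |∑ i ∈ Finset.range n, F ((i + 1 : ℕ) * Δ / n) * e i| ≤ η * n := by
  have hK0 : 0 ≤ K := (abs_nonneg _).trans (hF 0 ⟨le_rfl, hΔ.le⟩)
  have hC0 : 0 ≤ C := by
    have := (abs_nonneg _).trans (hC 0 ⟨le_rfl, hΔ.le⟩ Δ ⟨hΔ.le, le_rfl⟩)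
    rw [zero_sub, abs_neg, abs_of_pos hΔ] at this
    exact nonneg_of_mul_nonneg_left this hΔ
  have hδ : 0 < η / (K + C * Δ + 1) := by positivity
  set δ := η / (K + C * Δ + 1) with hδd
  filter_upwards [aux_unif e h δ hδ, eventually_ge_atTop 1] with n hn hn1
  have hn' : (0 : ℝ) < n := by exact_mod_cast hn1
  set a : ℕ → ℝ := fun i => F ((min (i + 1) n : ℕ) * Δ / n) with ha
  have h1 : ∑ i ∈ Finset.range n, F ((i + 1 : ℕ) * Δ / n) * e i
      = ∑ i ∈ Finset.range n, a i * e i := by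
    refine Finset.sum_congr rfl fun i hi => ?_
    have : min (i + 1) n = i + 1 := by have := Finset.mem_range.1 hi; omega
    simp only [ha, this]
  rw [h1, aux_abel]
  have h2 : |a n * ∑ i ∈ Finset.range n, e i| ≤ K * (δ * n) := by
    rw [abs_mul]
    exact mul_le_mul (hF _ (aux_grid hΔ (min_le_right _ _))) (hn n le_rfl) (abs_nonneg _) hK0
  have h3 : |∑ i ∈ Finset.range n, (a (i + 1) - a i) * ∑ j ∈ Finset.range (i + 1), e j|
      ≤ C * Δ * (δ * n) := by
    refine (Finset.abs_sum_le_sum_abs _ _).trans ?_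
    have : ∀ i ∈ Finset.range n,
        |(a (i + 1) - a i) * ∑ j ∈ Finset.range (i + 1), e j| ≤ (C * (Δ / n)) * (δ * n) := by
      intro i hi
      rw [abs_mul]
      refine mul_le_mul ?_ (hn _ (Finset.mem_range.1 hi)) (abs_nonneg _) (by positivity)
      refine (hC _ (aux_grid hΔ (min_le_right _ _)) _ (aux_grid hΔ (min_le_right _ _))).trans ?_
      refine mul_le_mul_of_nonneg_left ?_ hC0
      rw [← sub_div, ← sub_mul, abs_div, abs_mul, abs_of_pos hΔ, abs_of_pos hn']
      have : |((min (i + 1 + 1) n : ℕ) : ℝ) - (min (i + 1) n : ℕ)| ≤ 1 := by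
        have h5 : min (i + 1 + 1) n = min (i + 1) n ∨ min (i + 1 + 1) n = min (i + 1) n + 1 := by
          omega
        rcases h5 with h5 | h5 <;> rw [h5] <;> simp
      gcongr
      nlinarith
    refine (Finset.sum_le_sum this).trans ?_
    rw [Finset.sum_const, Finset.card_range, nsmul_eq_mul]
    apply le_of_eq; field_simp
  refine (abs_sub _ _).trans ((add_le_add h2 h3).trans ?_)
  have h4 : δ * (K + C * Δ + 1) = η := by rw [hδd]; field_simp
  rw [← h4]
  nlinarith [mul_pos hδ hn']

lemma aux_weighted (Δ : ℝ) (hΔ : 0 < Δ) (e : ℕ → ℝ)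
    (h : Tendsto (fun n : ℕ => (∑ i ∈ Finset.range n, e i) / n) atTop (𝓝 0))
    (B : ℝ) (hB0 : 0 ≤ B) (hB : ∀ n : ℕ, ∑ i ∈ Finset.range n, |e i| ≤ B * n)
    (F : ℝ → ℝ) (hF : ContinuousOn F (Icc 0 Δ)) (η : ℝ) (hη : 0 < η) :
    ∀ᶠ n : ℕ in atTop, |∑ i ∈ Finset.range n, F ((i + 1 : ℕ) * Δ / n) * e i| ≤ η * n := by
  have hδ : 0 < η / (2 * (B + 1)) := by positivity
  obtain ⟨p, hp⟩ := exists_polynomial_near_of_continuousOn 0 Δ F hF _ hδ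
  obtain ⟨K, hK⟩ := isCompact_Icc.exists_bound_of_continuousOn
    (s := Icc (0 : ℝ) Δ) (f := fun w => p.eval w) p.continuous.continuousOn
  obtain ⟨C, hC⟩ := isCompact_Icc.exists_bound_of_continuousOn
    (s := Icc (0 : ℝ) Δ) (f := fun w => p.derivative.eval w) p.derivative.continuous.continuousOn
  have hlip : ∀ w ∈ Icc 0 Δ, ∀ w' ∈ Icc 0 Δ, |p.eval w - p.eval w'| ≤ C * |w - w'| := by
    intro w hw w' hw'
    exact Convex.norm_image_sub_le_of_norm_deriv_le (𝕜 := ℝ) (f := fun w => p.eval w)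
      (s := Icc (0 : ℝ) Δ)
      (fun _ _ => p.differentiableAt) (fun y hy => by rw [Polynomial.deriv]; exact hC y hy)
      (convex_Icc _ _) hw' hw
  filter_upwards [aux_weighted_lip Δ hΔ e h _ C K hK hlip (η / 2) (by positivity)] with n hn
  have h1 : ∑ i ∈ Finset.range n, F ((i + 1 : ℕ) * Δ / n) * e i
      = ∑ i ∈ Finset.range n, p.eval ((i + 1 : ℕ) * Δ / n) * e i
        - ∑ i ∈ Finset.range n, (p.eval ((i + 1 : ℕ) * Δ / n) - F ((i + 1 : ℕ) * Δ / n)) * e i := by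
    rw [← Finset.sum_sub_distrib]
    refine Finset.sum_congr rfl fun i _ => by ring
  rw [h1]
  have h2 : |∑ i ∈ Finset.range n, (p.eval ((i + 1 : ℕ) * Δ / n) - F ((i + 1 : ℕ) * Δ / n)) * e i|
      ≤ η / (2 * (B + 1)) * (B * n) := by
    refine (Finset.abs_sum_le_sum_abs _ _).trans ?_
    refine le_trans ?_ (mul_le_mul_of_nonneg_left (hB n) hδ.le)
    rw [Finset.mul_sum]
    refine Finset.sum_le_sum fun i hi => ?_
    rw [abs_mul]
    exact mul_le_mul_of_nonneg_right
      (hp _ (aux_grid hΔ (Finset.mem_range.1 hi))).le (abs_nonneg _)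
  refine (abs_sub _ _).trans ((add_le_add hn h2).trans ?_)
  have h3 : η / (2 * (B + 1)) * (B * n) ≤ η / 2 * n := by
    have : η / (2 * (B + 1)) * (B * n) = η / 2 * n * (B / (B + 1)) := by field_simp
    rw [this]
    refine mul_le_of_le_one_right (by positivity) ?_
    rw [div_le_one (by positivity)]; linarith
  linarith

lemma aux_riemann (Δ : ℝ) (hΔ : 0 < Δ) (F : ℝ → ℝ) (hF : ContinuousOn F (Icc 0 Δ)) :
    Tendsto (fun n : ℕ => (1 / (n : ℝ)) * ∑ i ∈ Finset.range n, F ((i + 1 : ℕ) * Δ / n)) atTop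
      (𝓝 ((1 / Δ) * ∫ w in (0 : ℝ)..Δ, F w)) := by
  rw [Metric.tendsto_atTop]
  intro η hη
  have huc := isCompact_Icc.uniformContinuousOn_of_continuous hF
  rw [Metric.uniformContinuousOn_iff] at huc
  obtain ⟨δ, hδ, hd⟩ := huc (η / 2) (by positivity)
  obtain ⟨N, hN⟩ := exists_nat_gt (Δ / δ)
  refine ⟨N + 1, fun n hn => ?_⟩
  have hn1 : 1 ≤ n := by omega
  have hn0 : (0 : ℝ) < n := by exact_mod_cast hn1
  have hNn : (N : ℝ) ≤ n := by exact_mod_cast (by omega : N ≤ n)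
  have hsm : Δ / n < δ := by
    rw [div_lt_iff₀ hδ] at hN
    rw [div_lt_iff₀ hn0]; nlinarith
  have hgrid : ∀ k ≤ n, (k : ℝ) * Δ / n ∈ Icc 0 Δ := fun k hk => aux_grid hΔ hk
  have hint : ∀ k < n, IntervalIntegrable F volume ((k : ℝ) * Δ / n) ((k + 1 : ℕ) * Δ / n) := by
    intro k hk
    refine (hF.mono ?_).intervalIntegrable
    exact (ordConnected_Icc).uIcc_subset (hgrid k hk.le) (hgrid (k + 1) hk)
  have hadj := intervalIntegral.sum_integral_adjacent_intervals
    (a := fun k : ℕ => (k : ℝ) * Δ / n) hint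
  have e1 : ((n : ℝ)) * Δ / n = Δ := by field_simp
  simp only [Nat.cast_zero, zero_mul, zero_div, e1] at hadj
  have key : ∀ i ∈ Finset.range n, |F ((i + 1 : ℕ) * Δ / n) * (Δ / n) -
      ∫ w in ((i : ℝ) * Δ / n)..((i + 1 : ℕ) * Δ / n), F w| ≤ η / 2 * (Δ / n) := by
    intro i hi
    have hi' := Finset.mem_range.1 hi
    have e2 : ((i + 1 : ℕ) : ℝ) * Δ / n - (i : ℝ) * Δ / n = Δ / n := by push_cast; ring
    have hpos : 0 < Δ / n := by positivity
    have e3 : F ((i + 1 : ℕ) * Δ / n) * (Δ / n) =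
        ∫ w in ((i : ℝ) * Δ / n)..((i + 1 : ℕ) * Δ / n), F ((i + 1 : ℕ) * Δ / n) := by
      rw [intervalIntegral.integral_const, e2, smul_eq_mul, mul_comm]
    rw [e3, ← intervalIntegral.integral_sub intervalIntegrable_const (hint i hi')]
    have := intervalIntegral.norm_integral_le_of_norm_le_const (C := η / 2)
      (a := (i : ℝ) * Δ / n) (b := (i + 1 : ℕ) * Δ / n)
      (f := fun w => F ((i + 1 : ℕ) * Δ / n) - F w) ?_
    · rwa [e2, abs_of_pos hpos] at this
    · intro w hw
      rw [uIoc_of_le (by linarith)] at hw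
      have h0 := hgrid i hi'.le
      have h1 := hgrid (i + 1) hi'
      have := hd _ h1 w ⟨h0.1.trans hw.1.le, hw.2.trans h1.2⟩ (by
        rw [Real.dist_eq, abs_of_nonneg (by linarith [hw.2])]; linarith [hw.1])
      rw [Real.dist_eq] at this
      exact this.le
  have hfin : |∑ i ∈ Finset.range n, F ((i + 1 : ℕ) * Δ / n) * (Δ / n) - ∫ w in (0 : ℝ)..Δ, F w|
      ≤ η / 2 * Δ := by
    rw [← hadj, ← Finset.sum_sub_distrib]
    refine (Finset.abs_sum_le_sum_abs _ _).trans ((Finset.sum_le_sum key).trans ?_)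
    rw [Finset.sum_const, Finset.card_range, nsmul_eq_mul]
    apply le_of_eq; field_simp
  rw [← Finset.sum_mul] at hfin
  rw [Real.dist_eq]
  set S := ∑ i ∈ Finset.range n, F ((i + 1 : ℕ) * Δ / n)
  set I := ∫ w in (0 : ℝ)..Δ, F w
  have e4 : 1 / (n : ℝ) * S - 1 / Δ * I = (S * (Δ / n) - I) / Δ := by field_simp
  rw [e4, abs_div, abs_of_pos hΔ, div_lt_iff₀ hΔ]
  nlinarith

lemma aux_compact (A m M L : ℝ) (hA : 0 < A) (a b : ℝ) (γ : ℕ → ℝ) (g : ℕ → ℝ → ℝ)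
    (hγ : ∀ n, γ n ∈ Icc a b) (hg : ∀ n, inG A m M L (g n)) :
    ∃ ψ : ℕ → ℕ, StrictMono ψ ∧ ∃ γs ∈ Icc a b, ∃ gs : ℝ → ℝ, inG A m M L gs ∧
      Tendsto (fun k => |γ (ψ k) - γs|) atTop (𝓝 0) ∧ ∃ δ : ℕ → ℝ, Tendsto δ atTop (𝓝 0) ∧
        ∀ k, ∀ t ∈ Icc 0 A, |g (ψ k) t - gs t| ≤ δ k := by
  set S : Set (BoundedContinuousFunction (Icc (0 : ℝ) A) ℝ) :=
    {f | (∀ t, f t ∈ Icc m M) ∧ (∀ s t, s ≤ t → f t ≤ f s) ∧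
      (∀ s t, dist (f s) (f t) ≤ (Real.toNNReal L : ℝ) * dist s t)} with hS
  have hcl : IsClosed S := by
    have hev : ∀ t, Continuous fun f : BoundedContinuousFunction (Icc (0 : ℝ) A) ℝ => f t :=
      fun t => by fun_prop
    rw [hS]
    simp only [ofPred_and, ofPred_forall]
    refine IsClosed.inter ?_ (IsClosed.inter ?_ ?_)
    · exact isClosed_iInter fun t => isClosed_Icc.preimage (hev t)
    · exact isClosed_iInter fun s => isClosed_iInter fun t => isClosed_iInter fun _ =>
        isClosed_le (hev t) (hev s)
    · exact isClosed_iInter fun s => isClosed_iInter fun t =>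
        isClosed_le ((hev s).dist (hev t)) continuous_const
  have hcomp : IsCompact S := by
    refine BoundedContinuousFunction.arzela_ascoli₂ (Icc m M) isCompact_Icc S hcl
      (fun f t hf => hf.1 t) ?_
    exact (LipschitzWith.uniformEquicontinuous _ (Real.toNNReal L)
      (fun f => LipschitzWith.of_dist_le_mul f.2.2.2)).equicontinuous
  set G : ℕ → BoundedContinuousFunction (Icc (0 : ℝ) A) ℝ := fun n =>
    BoundedContinuousFunction.mkOfCompact ⟨(Icc (0 : ℝ) A).domRestrict (g n),
      continuousOn_iff_continuous_domRestrict.1 (hg n).1⟩ with hG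
  have hGv : ∀ n t, G n t = g n t := fun n t => rfl
  have hGS : ∀ n, G n ∈ S := by
    intro n
    refine ⟨fun t => (hg n).2.2.1 t t.2, fun s t hst => (hg n).2.1 s.2 t.2 hst, fun s t => ?_⟩
    exact (hg n).2.2.2.dist_le_mul s s.2 t t.2
  obtain ⟨⟨γs, gs⟩, ⟨hγs, hgs⟩, ψ, hψ, hlim⟩ :=
    ((isCompact_Icc (a := a) (b := b)).prod hcomp).tendsto_subseq
      (x := fun n => (γ n, G n)) (fun n => ⟨hγ n, hGS n⟩)
  have hl1 := (continuous_fst.tendsto _).comp hlim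
  have hl2 := (continuous_snd.tendsto _).comp hlim
  refine ⟨ψ, hψ, γs, hγs, IccExtend hA.le gs, ?_, ?_, fun k => dist (G (ψ k)) gs, ?_, ?_⟩
  · have hv : ∀ t (ht : t ∈ Icc (0 : ℝ) A), IccExtend hA.le gs t = gs ⟨t, ht⟩ :=
      fun t ht => IccExtend_of_mem _ _ ht
    refine ⟨(gs.continuous.Icc_extend' (h := hA.le)).continuousOn, ?_, ?_, ?_⟩
    · intro s hs t ht hst
      rw [hv s hs, hv t ht]
      exact hgs.2.1 ⟨s, hs⟩ ⟨t, ht⟩ hst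
    · intro t ht
      rw [hv t ht]; exact hgs.1 _
    · refine LipschitzOnWith.of_dist_le_mul fun s hs t ht => ?_
      rw [hv s hs, hv t ht]
      exact hgs.2.2 ⟨s, hs⟩ ⟨t, ht⟩
  · exact tendsto_iff_dist_tendsto_zero.1 hl1
  · exact tendsto_iff_dist_tendsto_zero.1 hl2
  · intro k t ht
    rw [IccExtend_of_mem _ _ ht]
    exact BoundedContinuousFunction.dist_coe_le_dist (f := G (ψ k)) (g := gs) ⟨t, ht⟩

lemma aux_log (c a b : ℝ) (hc : 0 < c) (ha : c ≤ a) (hb : c ≤ b) :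
    |Real.log a - Real.log b| ≤ |a - b| / c := by
  have key : ∀ a b : ℝ, c ≤ a → c ≤ b → Real.log a - Real.log b ≤ |a - b| / c := by
    intro a b ha hb
    have ha0 : 0 < a := hc.trans_le ha
    have hb0 : 0 < b := hc.trans_le hb
    rw [← Real.log_div ha0.ne' hb0.ne']
    refine (Real.log_le_sub_one_of_pos (by positivity)).trans ?_
    have : a / b - 1 = (a - b) / b := by field_simp
    rw [this]
    calc (a - b) / b ≤ |a - b| / b := by gcongr; exact le_abs_self _
      _ ≤ |a - b| / c := by gcongr
  rw [abs_le]
  have h1 := key a b ha hb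
  have h2 := key b a hb ha
  rw [abs_sub_comm] at h2
  constructor <;> linarith

lemma aux_pos (xm xM : ℝ) (hxm : 0 < xm) (hxM : 0 < xM) (γ y : ℝ)
    (hγ : γ ∈ Icc (-(1 / xM)) (1 / xm)) (hy : y ∈ Ioo (-xm) xM) : 0 < 1 + γ * y := by
  obtain ⟨h1, h2⟩ := hγ
  obtain ⟨h3, h4⟩ := hy
  rcases le_or_gt 0 y with h | h
  · have : -(1 / xM) * y ≤ γ * y := by gcongr
    have h5 : y / xM < 1 := by rwa [div_lt_one hxM]
    have h6 : -(1 / xM) * y = - (y / xM) := by ring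
    linarith
  · have : (1 / xm) * y ≤ γ * y := mul_le_mul_of_nonpos_right h2 h.le
    have h5 : -1 < y / xm := by rw [lt_div_iff₀ hxm]; linarith
    have h6 : (1 / xm) * y = y / xm := by ring
    linarith

lemma aux_Icc (n : ℕ) (f : ℕ → ℝ) :
    ∑ i ∈ Finset.Icc 1 n, f i = ∑ i ∈ Finset.range n, f (i + 1) := by
  induction n with
  | zero => simp
  | succ k ih => rw [Finset.sum_Icc_succ_top (by omega), ih, Finset.sum_range_succ]

lemma aux_det {Ω : Type*} (ω : Ω)
    (Δ A xm xM : ℝ) (hΔ : 0 < Δ) (hA : 0 < A) (hxm : 0 < xm) (hxM : 0 < xM)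
    (x z : ℝ → ℝ)
    (hxcont : ContinuousOn x (Icc 0 Δ))
    (hxrange : ∀ w ∈ Icc (0 : ℝ) Δ, x w ∈ Ioo (-xm) xM)
    (hzcont : ContinuousOn z (Icc 0 Δ))
    (hzrange : ∀ w ∈ Icc (0 : ℝ) Δ, z w ∈ Icc 0 A)
    (ε : ℤ → Ω → ℝ)
    (hε1 : Tendsto (fun n : ℕ => (∑ i ∈ Finset.range n, ε ((i + 1 : ℕ) : ℤ) ω) / n) atTop (𝓝 0))
    (B : ℝ) (hB0 : 0 ≤ B)
    (hB : ∀ n : ℕ, ∑ i ∈ Finset.range n, |ε ((i + 1 : ℕ) : ℤ) ω| ≤ B * n)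
    (γ₀ : ℝ) (hγ₀ : γ₀ ∈ Ioo (-(1 / xM)) (1 / xm))
    (m M L : ℝ) (hm : 0 < m)
    (g₀ : ℝ → ℝ) (hg₀ : inG A m M L g₀)
    (huniq : ∀ γ ∈ Icc (-(1 / xM)) (1 / xm), ∀ g : ℝ → ℝ, inG A m M L g →
      Qlim Δ γ₀ x z g₀ γ g = 0 → γ = γ₀ ∧ ∀ t ∈ Icc (0 : ℝ) A, g t = g₀ t)
    (γhat : ℕ → ℝ) (ghat : ℕ → ℝ → ℝ)
    (hest : ∀ n : ℕ,
      γhat n ∈ Icc (-(1 / xM)) (1 / xm) ∧ inG A m M L (ghat n) ∧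
      ∀ γ ∈ Icc (-(1 / xM)) (1 / xm), ∀ g : ℝ → ℝ, inG A m M L g →
        Qemp Δ γ₀ x z g₀ ε n (γhat n) (ghat n) ω ≤ Qemp Δ γ₀ x z g₀ ε n γ g ω) :
    ∀ e > (0 : ℝ), ∃ N : ℕ, ∀ n ≥ N, ∀ t ∈ Icc (0 : ℝ) A,
      |Real.log (ghat n t) - Real.log (g₀ t)| < e := by
  by_contra! hcon
  obtain ⟨η, hη, hbad⟩ := hcon
  obtain ⟨ψ₁, hψ₁, hbad'⟩ := extraction_of_frequently_atTop (frequently_atTop.2 hbad)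
  obtain ⟨ψ₂, hψ₂, γs, hγs, gs, hgs, hγlim, δ, hδ, hgδ⟩ := aux_compact A m M L hA
    (-(1 / xM)) (1 / xm) (fun k => γhat (ψ₁ k)) (fun k => ghat (ψ₁ k))
    (fun k => (hest _).1) (fun k => (hest _).2.1)
  set ψ : ℕ → ℕ := fun k => ψ₁ (ψ₂ k) with hψd
  have hψ : StrictMono ψ := hψ₁.comp hψ₂
  -- lower bound for `1 + γ x`
  obtain ⟨c, hc, hcb⟩ : ∃ c > 0, ∀ γ ∈ Icc (-(1 / xM)) (1 / xm), ∀ w ∈ Icc (0 : ℝ) Δ,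
      c ≤ 1 + γ * x w := by
    have hK : IsCompact (Icc (-(1 / xM)) (1 / xm) ×ˢ Icc (0 : ℝ) Δ) :=
      isCompact_Icc.prod isCompact_Icc
    have hne : (Icc (-(1 / xM)) (1 / xm) ×ˢ Icc (0 : ℝ) Δ).Nonempty :=
      ⟨(γs, 0), hγs, le_rfl, hΔ.le⟩
    have hco : ContinuousOn (fun p : ℝ × ℝ => 1 + p.1 * x p.2)
        (Icc (-(1 / xM)) (1 / xm) ×ˢ Icc (0 : ℝ) Δ) := by
      refine continuousOn_const.add (continuousOn_fst.mul ?_)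
      exact hxcont.comp continuousOn_snd fun p hp => hp.2
    obtain ⟨p, hp, hmin⟩ := hK.exists_isMinOn hne hco
    exact ⟨_, aux_pos xm xM hxm hxM p.1 (x p.2) hp.1 (hxrange _ hp.2),
      fun γ hγ w hw => hmin (show (γ, w) ∈ _ from ⟨hγ, hw⟩)⟩
  -- difference functions
  set D : ℝ → (ℝ → ℝ) → ℝ → ℝ := fun γ g w =>
    Real.log (1 + γ₀ * x w) - Real.log (1 + γ * x w) +
      Real.log (g₀ (z w)) - Real.log (g (z w)) with hD
  have hDcont : ContinuousOn (D γs gs) (Icc 0 Δ) := by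
    have hl : ∀ γ ∈ Icc (-(1 / xM)) (1 / xm),
        ContinuousOn (fun w => Real.log (1 + γ * x w)) (Icc 0 Δ) := fun γ hγ =>
      (continuousOn_const.add (continuousOn_const.mul hxcont)).log
        fun w hw => (hc.trans_le (hcb γ hγ w hw)).ne'
    have hg : ∀ g, inG A m M L g → ContinuousOn (fun w => Real.log (g (z w))) (Icc 0 Δ) :=
      fun g hg => (hg.1.comp hzcont hzrange).log
        fun w hw => (hm.trans_le (hg.2.2.1 _ (hzrange w hw)).1).ne'
    exact (((hl γ₀ ⟨hγ₀.1.le, hγ₀.2.le⟩).sub (hl γs hγs)).add (hg g₀ hg₀)).sub (hg gs hgs)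
  set d : ℕ → ℝ := fun k => |γhat (ψ k) - γs| * (xm + xM) / c + δ k / m with hd
  have hdlim : Tendsto d atTop (𝓝 0) := by
    have := ((hγlim.mul_const (xm + xM)).div_const c).add (hδ.div_const m)
    simpa using this
  have hDd : ∀ k, ∀ w ∈ Icc 0 Δ, |D (γhat (ψ k)) (ghat (ψ k)) w - D γs gs w| ≤ d k := by
    intro k w hw
    have h1 := aux_log c _ _ hc (hcb _ (hest (ψ k)).1 w hw) (hcb γs hγs w hw)
    have h2 := aux_log m _ _ hm ((hest (ψ k)).2.1.2.2.1 _ (hzrange w hw)).1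
      (hgs.2.2.1 _ (hzrange w hw)).1
    have h3 : |1 + γhat (ψ k) * x w - (1 + γs * x w)| ≤ |γhat (ψ k) - γs| * (xm + xM) := by
      have : 1 + γhat (ψ k) * x w - (1 + γs * x w) = (γhat (ψ k) - γs) * x w := by ring
      rw [this, abs_mul]
      have hx := hxrange w hw
      refine mul_le_mul_of_nonneg_left ?_ (abs_nonneg _)
      rw [abs_le]; constructor <;> linarith [hx.1, hx.2]
    have h4 := hgδ k _ (hzrange w hw)
    have h5 : |Real.log (1 + γhat (ψ k) * x w) - Real.log (1 + γs * x w)|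
        ≤ |γhat (ψ k) - γs| * (xm + xM) / c := h1.trans (by gcongr)
    have h6 : |Real.log (ghat (ψ k) (z w)) - Real.log (gs (z w))| ≤ δ k / m :=
      h2.trans (by gcongr)
    rw [abs_le] at h5 h6 ⊢
    simp only [hD, hd]
    constructor <;> linarith [h5.1, h5.2, h6.1, h6.2]
  -- basic inequality
  have hbasic : ∀ n : ℕ, 1 ≤ n →
      ∑ i ∈ Finset.range n, (D (γhat n) (ghat n) ((i + 1 : ℕ) * Δ / n)) ^ 2 ≤
      -2 * ∑ i ∈ Finset.range n,
        D (γhat n) (ghat n) ((i + 1 : ℕ) * Δ / n) * ε ((i + 1 : ℕ) : ℤ) ω := by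
    intro n hn
    have hn0 : (0 : ℝ) < n := by exact_mod_cast hn
    have h := (hest n).2.2 γ₀ ⟨hγ₀.1.le, hγ₀.2.le⟩ g₀ hg₀
    unfold Qemp at h
    have h' := le_of_mul_le_mul_left h (by positivity)
    rw [aux_Icc n (fun i => _), aux_Icc n (fun i => _), ← sub_nonneg,
      ← Finset.sum_sub_distrib] at h'
    rw [← sub_nonneg, Finset.mul_sum, ← Finset.sum_sub_distrib]
    refine h'.trans (le_of_eq ?_)
    refine Finset.sum_congr rfl fun i _ => ?_
    simp only [hD]; ring
  -- limit of Riemann sums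
  have hR := (aux_riemann Δ hΔ (fun w => (D γs gs w) ^ 2) (hDcont.pow 2)).comp hψ.tendsto_atTop
  have hQ : Qlim Δ γ₀ x z g₀ γs gs = (1 / Δ) * ∫ w in (0 : ℝ)..Δ, (D γs gs w) ^ 2 := rfl
  rw [← hQ] at hR
  have hQ0 : 0 ≤ Qlim Δ γ₀ x z g₀ γs gs := by
    rw [hQ]
    have : 0 ≤ ∫ w in (0 : ℝ)..Δ, (D γs gs w) ^ 2 :=
      intervalIntegral.integral_nonneg hΔ.le fun w _ => sq_nonneg _
    positivity
  have hQle : ∀ r > 0, Qlim Δ γ₀ x z g₀ γs gs ≤ 4 * r := by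
    intro r hr
    have hlim2 : Tendsto (fun k => 2 * d k ^ 2 + 4 * (d k * B) + 4 * r) atTop (𝓝 (4 * r)) := by
      have := (((hdlim.pow 2).const_mul 2).add ((hdlim.mul_const B).const_mul 4)).add_const (4 * r)
      simpa using this
    refine le_of_tendsto_of_tendsto hR hlim2 ?_
    have hw := hψ.tendsto_atTop.eventually (aux_weighted Δ hΔ
      (fun i => ε ((i + 1 : ℕ) : ℤ) ω) hε1 B hB0 hB (D γs gs) hDcont r hr)
    filter_upwards [hw, hψ.tendsto_atTop.eventually (eventually_ge_atTop 1)] with k hk hk1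
    have hn0 : (0 : ℝ) < (ψ k : ℕ) := by exact_mod_cast hk1
    have hb := hbasic (ψ k) hk1
    simp only [Function.comp_apply]
    set n := ψ k with hn
    rw [one_div, inv_mul_le_iff₀ hn0]
    set Dn := D (γhat n) (ghat n)
    set Ds := D γs gs
    have hdk : 0 ≤ d k := (abs_nonneg _).trans (hDd k 0 ⟨le_rfl, hΔ.le⟩)
    have hg : ∀ i ∈ Finset.range n, ((i + 1 : ℕ) : ℝ) * Δ / n ∈ Icc 0 Δ :=
      fun i hi => aux_grid hΔ (Finset.mem_range.1 hi)
    have s1 : ∑ i ∈ Finset.range n, Ds ((i + 1 : ℕ) * Δ / n) ^ 2 ≤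
        2 * ∑ i ∈ Finset.range n, Dn ((i + 1 : ℕ) * Δ / n) ^ 2 + 2 * d k ^ 2 * n := by
      have : 2 * ∑ i ∈ Finset.range n, Dn ((i + 1 : ℕ) * Δ / n) ^ 2 + 2 * d k ^ 2 * n
          = ∑ i ∈ Finset.range n, (2 * Dn ((i + 1 : ℕ) * Δ / n) ^ 2 + 2 * d k ^ 2) := by
        rw [Finset.sum_add_distrib, Finset.mul_sum, Finset.sum_const, Finset.card_range,
          nsmul_eq_mul]; ring
      rw [this]
      refine Finset.sum_le_sum fun i hi => ?_
      have h1 := hDd k _ (hg i hi)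
      have h2 : (Dn ((i + 1 : ℕ) * Δ / n) - Ds ((i + 1 : ℕ) * Δ / n)) ^ 2 ≤ d k ^ 2 := by
        rw [← sq_abs]; gcongr
      nlinarith [sq_nonneg (2 * Dn ((i + 1 : ℕ) * Δ / n) - Ds ((i + 1 : ℕ) * Δ / n))]
    have s2 : |∑ i ∈ Finset.range n, Dn ((i + 1 : ℕ) * Δ / n) * ε ((i + 1 : ℕ) : ℤ) ω
        - ∑ i ∈ Finset.range n, Ds ((i + 1 : ℕ) * Δ / n) * ε ((i + 1 : ℕ) : ℤ) ω|
        ≤ d k * (B * n) := by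
      rw [← Finset.sum_sub_distrib]
      refine (Finset.abs_sum_le_sum_abs _ _).trans ?_
      refine le_trans ?_ (mul_le_mul_of_nonneg_left (hB n) hdk)
      rw [Finset.mul_sum]
      refine Finset.sum_le_sum fun i hi => ?_
      rw [← sub_mul, abs_mul]
      exact mul_le_mul_of_nonneg_right (hDd k _ (hg i hi)) (abs_nonneg _)
    have s3 := abs_le.1 s2
    have s4 := abs_le.1 hk
    nlinarith [s3.1, s4.1]
  have hQz : Qlim Δ γ₀ x z g₀ γs gs = 0 := by
    refine le_antisymm (le_of_forall_pos_le_add fun r hr => ?_) hQ0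
    have := hQle (r / 4) (by positivity)
    linarith
  obtain ⟨-, hgeq⟩ := huniq γs hγs gs hgs hQz
  have hfin : ∀ᶠ k in atTop, δ k < η * m := hδ.eventually_lt_const (by positivity)
  obtain ⟨k, hk⟩ := hfin.exists
  obtain ⟨t, ht, hbt⟩ := hbad' (ψ₂ k)
  have h2 := aux_log m _ _ hm ((hest (ψ k)).2.1.2.2.1 t ht).1 (hg₀.2.2.1 t ht).1
  have h4 := hgδ k t ht
  rw [hgeq t ht] at h4
  have h5 : |ghat (ψ k) t - g₀ t| / m < η := by
    rw [div_lt_iff₀ hm]; exact lt_of_le_of_lt h4 hk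
  exact absurd hbt (not_le.2 (lt_of_le_of_lt h2 h5))

/-- Corollary 1: under the hypotheses of Theorem 2,
`sup_{t ∈ [0,A]} |log ĝₙ(t) - log g₀(t)| → 0` with probability 1. -/
theorem stmt6
    {Ω : Type*} [MeasurableSpace Ω] (μ : Measure Ω) [IsProbabilityMeasure μ]
    (Δ A xm xM : ℝ) (hΔ : 0 < Δ) (hA : 0 < A) (hxm : 0 < xm) (hxM : 0 < xM)
    (x z : ℝ → ℝ)
    (hxcont : ContinuousOn x (Icc 0 Δ))
    (hxrange : ∀ w ∈ Icc (0 : ℝ) Δ, x w ∈ Ioo (-xm) xM)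
    (hzcont : ContinuousOn z (Icc 0 Δ))
    (hzrange : ∀ w ∈ Icc (0 : ℝ) Δ, z w ∈ Icc 0 A)
    (hzmono : StrictMonoOn z (Icc 0 Δ))
    (U : ℤ → Ω → ℝ) (hUmeas : ∀ j, Measurable (U j))
    (hUindep : iIndepFun U μ)
    (hUident : ∀ j, μ.map (U j) = μ.map (U 0))
    (σ : ℝ) (hσ : 0 < σ)
    (hUmean : ∫ ω, U 0 ω ∂μ = 0)
    (hUvar : ∫ ω, (U 0 ω) ^ 2 ∂μ = σ ^ 2)
    (hU8 : Integrable (fun ω => (U 0 ω) ^ 8) μ)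
    (φ : ℝ) (hφ0 : φ ≠ 0) (hφ1 : |φ| < 1)
    (ε : ℤ → Ω → ℝ) (hεmeas : ∀ i, Measurable (ε i))
    (hεsum : ∀ᵐ ω ∂μ, ∀ i : ℤ, HasSum (fun j : ℕ => φ ^ j * U (i - (j : ℤ)) ω) (ε i ω))
    (γ₀ : ℝ) (hγ₀ : γ₀ ∈ Ioo (-(1 / xM)) (1 / xm))
    (m M L : ℝ) (hm : 0 < m) (hmM : m < M) (hL : 0 < L)
    (g₀ : ℝ → ℝ) (hg₀ : inG A m M L g₀)
    (huniq : ∀ γ ∈ Icc (-(1 / xM)) (1 / xm), ∀ g : ℝ → ℝ, inG A m M L g →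
      Qlim Δ γ₀ x z g₀ γ g = 0 → γ = γ₀ ∧ ∀ t ∈ Icc (0 : ℝ) A, g t = g₀ t)
    (γhat : ℕ → Ω → ℝ) (ghat : ℕ → Ω → ℝ → ℝ)
    (hest : ∀ᵐ ω ∂μ, ∀ n : ℕ,
      γhat n ω ∈ Icc (-(1 / xM)) (1 / xm) ∧ inG A m M L (ghat n ω) ∧
      ∀ γ ∈ Icc (-(1 / xM)) (1 / xm), ∀ g : ℝ → ℝ, inG A m M L g →
        Qemp Δ γ₀ x z g₀ ε n (γhat n ω) (ghat n ω) ω ≤ Qemp Δ γ₀ x z g₀ ε n γ g ω) :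
    ∀ᵐ ω ∂μ, ∀ e > (0 : ℝ), ∃ N : ℕ, ∀ n ≥ N, ∀ t ∈ Icc (0 : ℝ) A,
      |Real.log (ghat n ω t) - Real.log (g₀ t)| < e := by
  have hU2 : MemLp (U 0) 2 μ := by
    have h8 : MemLp (U 0) 8 μ := by
      rw [← integrable_norm_rpow_iff (hUmeas 0).aestronglyMeasurable (by norm_num) (by norm_num)]
      refine hU8.congr (Eventually.of_forall fun ω => ?_)
      have h : (8 : ENNReal).toReal = ((8 : ℕ) : ℝ) := by norm_num
      simp only [h, Real.rpow_natCast, Real.norm_eq_abs]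
      exact ((by decide : Even 8).pow_abs _).symm
    exact h8.mono_exponent (by norm_num)
  have hid : ∀ j, IdentDistrib (U j) (U 0) μ μ := fun j =>
    ⟨(hUmeas j).aemeasurable, (hUmeas 0).aemeasurable, hUident j⟩
  have hid' : ∀ i j, IdentDistrib (U i) (U j) μ μ := fun i j => (hid i).trans (hid j).symm
  have hint1 : Integrable (U 1) μ := (hid 1).symm.integrable_iff.1 (hU2.integrable (by norm_num))
  have hsl1 := strong_law_ae_real (μ := μ) (fun i : ℕ => U ((i + 1 : ℕ) : ℤ))
    (by simpa using hint1)
    (fun i j hij => hUindep.indepFun (by simpa using hij)) (fun i => hid' _ _)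
  have hsqm : Measurable (fun r : ℝ => r ^ 2) := by fun_prop
  have hsl2 := strong_law_ae_real (μ := μ) (fun i : ℕ => (fun r : ℝ => r ^ 2) ∘ U ((i + 1 : ℕ) : ℤ))
    (((hid' 0 _).comp hsqm).integrable_iff.1 hU2.integrable_sq)
    (fun i j hij => (hUindep.indepFun (by simpa using hij)).comp hsqm hsqm)
    (fun i => (hid' _ _).comp hsqm)
  have hmean : ∫ ω, U ((0 + 1 : ℕ) : ℤ) ω ∂μ = 0 := by
    rw [(hid _).integral_eq, hUmean]
  filter_upwards [hsl1, hsl2, hεsum, hest] with ω h1 h2 h3 h4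
  rw [hmean] at h1
  have hrec : ∀ n : ℕ, ε ((n + 1 : ℕ) : ℤ) ω = φ * ε (n : ℤ) ω + U ((n + 1 : ℕ) : ℤ) ω := by
    intro n
    have ha := (h3 (n : ℤ)).mul_left φ
    have hb : HasSum (fun j : ℕ => φ ^ (j + 1) * U (((n + 1 : ℕ) : ℤ) - ((j + 1 : ℕ) : ℤ)) ω)
        (φ * ε (n : ℤ) ω) := by
      refine ha.congr_fun fun j => ?_
      have : ((n + 1 : ℕ) : ℤ) - ((j + 1 : ℕ) : ℤ) = (n : ℤ) - (j : ℤ) := by push_cast; ring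
      rw [this]; ring
    have hc := HasSum.zero_add (f := fun j : ℕ => φ ^ j * U (((n + 1 : ℕ) : ℤ) - (j : ℤ)) ω) hb
    have := (h3 ((n + 1 : ℕ) : ℤ)).unique hc
    rw [this]; simp; ring
  obtain ⟨hs, B, hB0, hB⟩ := aux_noise φ hφ1 (fun n => ε (n : ℤ) ω)
    (fun n => U ((n + 1 : ℕ) : ℤ) ω) _ hrec h1 h2
  exact aux_det ω Δ A xm xM hΔ hA hxm hxM x z hxcont hxrange hzcont hzrange ε hs B hB0 hB γ₀ hγ₀
    m M L hm g₀ hg₀ huniq (fun n => γhat n ω) (fun n => ghat n ω) h4
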